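/- arXiv:2511.03708 — 3 statements merged into one kernel-verified Lean document; each statement's English description precedes it below -/
import Mathlib

section
/- Let M ≥ 2 be an integer and let u* be a minimizer of ψ_M over U_M. Then ψ_M(u*) = u*_1 (the branch corresponding to α = ∞ is active at index 1), and there exists a nonincreasing sequence γ_2 ≥ γ_3 ≥ ⋯ ≥ γ_M with each γ_i ∈ 𝒮 such that η_i(u*, γ_i) − h_M(γ_i) = ψ_M(u*) for every 2 ≤ i ≤ M. -/
noncomputable def gammaMin (d : ℕ) (β : ℝ) : ℝ := β / (2 * β + d)

noncomputable def gammaMax (d : ℕ) (β : ℝ) : ℝ := (β + d) / (2 * β + d)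

noncomputable def Sset (d : ℕ) (β : ℝ) : Set ℝ := Set.Icc (gammaMin d β) (gammaMax d β)

noncomputable def hFun (M : ℕ) (γ : ℝ) : ℝ := (1 - γ) / (1 - γ ^ M)

/-- η_1(u,γ) = u_1, η_i(u,γ) = u_i − γ·u_{i−1} for 2 ≤ i ≤ M−1, η_M(u,γ) = 1 − γ·u_{M−1}. -/
noncomputable def etaFun (M : ℕ) (u : ℕ → ℝ) (γ : ℝ) (i : ℕ) : ℝ :=
  if i = 1 then u 1 else if i = M then 1 - γ * u (M - 1) else u i - γ * u (i - 1)

/-- Ψ_M(u,γ) = max_{1≤i≤M} η_i(u,γ) − h_M(γ). -/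
noncomputable def PsiFun (M : ℕ) (u : ℕ → ℝ) (γ : ℝ) : ℝ :=
  (⨆ i : Set.Icc 1 M, etaFun M u γ i.1) - hFun M γ

/-- ψ_M(u) = max( u_1, sup_{γ∈𝒮} Ψ_M(u,γ) ). -/
noncomputable def psiFun (d : ℕ) (β : ℝ) (M : ℕ) (u : ℕ → ℝ) : ℝ :=
  max (u 1) (⨆ γ : Sset d β, PsiFun M u γ.1)

/-- U_M = { u : 0 ≤ u_1 ≤ u_2 ≤ ⋯ ≤ u_{M−1} ≤ 1 } (only coordinates 1,…,M−1 matter). -/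
def UM (M : ℕ) : Set (ℕ → ℝ) :=
  {u | 0 ≤ u 1 ∧ u (M - 1) ≤ 1 ∧ ∀ i, 1 ≤ i → i + 1 ≤ M - 1 → u i ≤ u (i + 1)}

/-- ψ*_M = inf_{u ∈ U_M} ψ_M(u). -/
noncomputable def psiStar (d : ℕ) (β : ℝ) (M : ℕ) : ℝ :=
  sInf (psiFun d β M '' UM M)

/-- The sequence extended by the value one at index M. -/
noncomputable def extSeq (M : ℕ) (u : ℕ → ℝ) (i : ℕ) : ℝ := if i = M then 1 else u i

/-- The extremal recursion. -/
noncomputable def recSeq (g : ℝ → ℝ) (v : ℝ) : ℕ → ℝ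
  | 0 => v
  | n + 1 => v + g (recSeq g v n)

lemma eta_ext (M : ℕ) (u : ℕ → ℝ) (γ : ℝ) (i : ℕ) (h2 : 2 ≤ i) (hi : i ≤ M) :
    etaFun M u γ i = extSeq M u i - γ * extSeq M u (i - 1) := by
  unfold etaFun extSeq
  have h1 : i ≠ 1 := by omega
  have h3 : i - 1 ≠ M := by omega
  by_cases h : i = M
  · subst h; simp [h1, h3]
  · simp [h1, h3, h]

lemma S_bounds (d : ℕ) (hd : 1 ≤ d) (β : ℝ) (hβ : 0 < β) {γ : ℝ} (h : γ ∈ Sset d β) :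
    0 < γ ∧ γ < 1 := by
  have hd' : (1 : ℝ) ≤ d := by exact_mod_cast hd
  unfold Sset gammaMin gammaMax at h
  have h1 : 0 < β / (2 * β + d) := by positivity
  have h2 : (β + d) / (2 * β + d) < 1 := by
    rw [div_lt_one (by positivity)]; linarith
  exact ⟨h1.trans_le h.1, h.2.trans_lt h2⟩

lemma S_nonempty (d : ℕ) (β : ℝ) (hβ : 0 < β) : (Sset d β).Nonempty := by
  refine ⟨gammaMin d β, le_refl _, ?_⟩
  unfold gammaMin gammaMax
  have : (0 : ℝ) ≤ d := Nat.cast_nonneg d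
  gcongr
  linarith

lemma pow_M_lt {M : ℕ} (hM : 2 ≤ M) {γ : ℝ} (h : 0 < γ ∧ γ < 1) : 0 < γ ^ M ∧ γ ^ M < 1 :=
  ⟨pow_pos h.1 M, pow_lt_one₀ h.1.le h.2 (by omega)⟩

lemma h_ge {M : ℕ} (hM : 2 ≤ M) {γ : ℝ} (h : 0 < γ ∧ γ < 1) : 1 - γ ≤ hFun M γ := by
  unfold hFun
  obtain ⟨h1, h2⟩ := pow_M_lt hM h
  rw [le_div_iff₀ (by linarith)]
  nlinarith [h.2]

lemma h_cont (d : ℕ) (hd : 1 ≤ d) (β : ℝ) (hβ : 0 < β) {M : ℕ} (hM : 2 ≤ M) :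
    ContinuousOn (hFun M) (Sset d β) := by
  unfold hFun
  refine ContinuousOn.div (by fun_prop) (by fun_prop) ?_
  intro γ hγ
  have := pow_M_lt hM (S_bounds d hd β hβ hγ)
  linarith [this.2]

lemma exists_argmin (d : ℕ) (hd : 1 ≤ d) (β : ℝ) (hβ : 0 < β) {M : ℕ} (hM : 2 ≤ M) :
    ∃ G : ℝ → ℝ, ∀ x, G x ∈ Sset d β ∧
      ∀ γ ∈ Sset d β, G x * x + hFun M (G x) ≤ γ * x + hFun M γ := by
  have key : ∀ x : ℝ, ∃ a, a ∈ Sset d β ∧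
      ∀ γ ∈ Sset d β, a * x + hFun M a ≤ γ * x + hFun M γ := by
    intro x
    have hc : ContinuousOn (fun γ => γ * x + hFun M γ) (Sset d β) :=
      ContinuousOn.add (by fun_prop) (h_cont d hd β hβ hM)
    obtain ⟨a, ha, hm⟩ := (isCompact_Icc (a := gammaMin d β) (b := gammaMax d β)).exists_isMinOn
      (S_nonempty d β hβ) hc
    exact ⟨a, ha, fun γ hγ => hm hγ⟩
  choose G hG using key
  exact ⟨G, hG⟩

/-- Upper bound for the inner function. -/
lemma Psi_le (d : ℕ) (hd : 1 ≤ d) (β : ℝ) (hβ : 0 < β) {M : ℕ} (hM : 2 ≤ M)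
    (G : ℝ → ℝ) (hG : ∀ x, G x ∈ Sset d β ∧
      ∀ γ ∈ Sset d β, G x * x + hFun M (G x) ≤ γ * x + hFun M γ)
    (u : ℕ → ℝ) (c : ℝ) (h1 : u 1 ≤ c)
    (h2 : ∀ i, 2 ≤ i → i ≤ M → extSeq M u i ≤ c +
      (G (extSeq M u (i - 1)) * extSeq M u (i - 1) + hFun M (G (extSeq M u (i - 1)))))
    {γ : ℝ} (hγ : γ ∈ Sset d β) : PsiFun M u γ ≤ c := by
  unfold PsiFun
  have hb := S_bounds d hd β hβ hγ
  have hh := h_ge hM hb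
  haveI : Nonempty (Set.Icc 1 M) := ⟨⟨1, le_refl _, by omega⟩⟩
  rw [sub_le_iff_le_add]
  refine ciSup_le ?_
  rintro ⟨i, hi1, hi2⟩
  by_cases hi : i = 1
  · subst hi
    simp only [etaFun, if_true]
    linarith [hb.2]
  · have h3 : 2 ≤ i := by omega
    simp only
    rw [eta_ext M u γ i h3 hi2]
    have := h2 i h3 hi2
    have := (hG (extSeq M u (i - 1))).2 γ hγ
    linarith

lemma le_psi (d : ℕ) (hd : 1 ≤ d) (β : ℝ) (hβ : 0 < β) {M : ℕ} (hM : 2 ≤ M)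
    (u : ℕ → ℝ) {γ : ℝ} (hγ : γ ∈ Sset d β) (i : ℕ) (hi1 : 1 ≤ i) (hi2 : i ≤ M) :
    etaFun M u γ i - hFun M γ ≤ psiFun d β M u := by
  obtain ⟨G, hG⟩ := exists_argmin d hd β hβ hM
  have hbdd : BddAbove (Set.range fun γ : Sset d β => PsiFun M u γ.1) := by
    let F : ℕ → ℝ := fun i => extSeq M u i -
      (G (extSeq M u (i - 1)) * extSeq M u (i - 1) + hFun M (G (extSeq M u (i - 1))))
    obtain ⟨C, hC⟩ := ((Set.finite_Icc 2 M).image F).bddAbove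
    refine ⟨max (u 1) C, ?_⟩
    rintro _ ⟨γ', rfl⟩
    refine Psi_le d hd β hβ hM G hG u _ (le_max_left _ _) ?_ γ'.2
    intro j hj1 hj2
    have h1 : F j ≤ C := hC ⟨j, ⟨hj1, hj2⟩, rfl⟩
    have h2 := le_max_right (u 1) C
    simp only [F] at h1
    linarith
  have h1 : PsiFun M u γ ≤ ⨆ γ : Sset d β, PsiFun M u γ.1 := le_ciSup hbdd ⟨γ, hγ⟩
  have h2 : etaFun M u γ i ≤ ⨆ i : Set.Icc 1 M, etaFun M u γ i.1 :=
    le_ciSup (f := fun i : Set.Icc 1 M => etaFun M u γ i.1) (Set.finite_range _).bddAbove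
      ⟨i, hi1, hi2⟩
  unfold psiFun
  refine le_trans ?_ (le_max_right _ _)
  unfold PsiFun at h1 ⊢
  unfold PsiFun at *
  linarith

lemma recSeq_cont (g : ℝ → ℝ) (hg : Continuous g) (n : ℕ) :
    Continuous (fun v => recSeq g v n) := by
  induction n with
  | zero => exact continuous_id
  | succ n ih => exact continuous_id.add (hg.comp ih)

lemma recSeq_nonneg (g : ℝ → ℝ) (hg0 : ∀ x, 0 ≤ x → 0 ≤ g x) (v : ℝ) (hv : 0 ≤ v) (n : ℕ) :
    0 ≤ recSeq g v n := by
  induction n with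
  | zero => exact hv
  | succ n ih => exact add_nonneg hv (hg0 _ ih)

lemma recSeq_mono (g : ℝ → ℝ) (hg : StrictMono g) (hg0 : ∀ x, 0 ≤ x → 0 ≤ g x) (v : ℝ)
    (hv : 0 ≤ v) (n : ℕ) : recSeq g v n ≤ recSeq g v (n + 1) := by
  induction n with
  | zero => simpa [recSeq] using hg0 v hv
  | succ n ih =>
    have := hg.monotone ih
    show v + g (recSeq g v n) ≤ v + g (recSeq g v (n + 1))
    linarith

theorem stmt2 (d : ℕ) (hd : 1 ≤ d) (β : ℝ) (hβ : 0 < β) (M : ℕ) (hM2 : 2 ≤ M)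
    (u : ℕ → ℝ) (hu : u ∈ UM M) (hmin : psiFun d β M u = psiStar d β M) :
    psiFun d β M u = u 1 ∧
    ∃ γ : ℕ → ℝ,
      (∀ i, 2 ≤ i → i ≤ M → γ i ∈ Sset d β) ∧
      (∀ i j, 2 ≤ i → i ≤ j → j ≤ M → γ j ≤ γ i) ∧
      (∀ i, 2 ≤ i → i ≤ M → etaFun M u (γ i) i - hFun M (γ i) = psiFun d β M u) := by
  obtain ⟨G, hG⟩ := exists_argmin d hd β hβ hM2
  have hGb : ∀ x, 0 < G x ∧ G x < 1 := fun x => S_bounds d hd β hβ (hG x).1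
  obtain ⟨g, hg⟩ : ∃ g : ℝ → ℝ, ∀ x, g x = G x * x + hFun M (G x) := ⟨_, fun _ => rfl⟩
  have hgle : ∀ x, ∀ γ ∈ Sset d β, g x ≤ γ * x + hFun M γ := fun x γ hγ => by
    rw [hg]; exact (hG x).2 γ hγ
  have hmono : StrictMono g := by
    intro x y hxy
    have h1 := hgle x (G y) (hG y).1
    rw [hg y]
    nlinarith [(hGb y).1]
  have hcont : Continuous g := by
    have : LipschitzWith 1 g := by
      refine LipschitzWith.of_le_add fun x y => ?_
      have h1 := hgle x (G y) (hG y).1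
      rw [hg y, Real.dist_eq]
      have h2 : G y * (x - y) ≤ |x - y| := by
        nlinarith [(hGb y).1, (hGb y).2, le_abs_self (x - y), abs_nonneg (x - y)]
      linarith
    exact this.continuous
  have hg0 : ∀ x, 0 ≤ x → 0 ≤ g x := by
    intro x hx
    rw [hg]
    have h1 := h_ge hM2 (hGb x)
    have h2 := mul_nonneg (hGb x).1.le hx
    linarith [(hGb x).2]
  have hg1 : 1 ≤ g 1 := by
    rw [hg]
    have h1 := h_ge hM2 (hGb 1)
    linarith
  obtain ⟨v, hv⟩ : ∃ v, v = psiFun d β M u := ⟨_, rfl⟩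
  obtain ⟨E, hE⟩ : ∃ E, E = extSeq M u := ⟨_, rfl⟩
  have hE1 : E 1 = u 1 := by
    rw [hE]; unfold extSeq; rw [if_neg (by omega)]
  have hEM : E M = 1 := by
    rw [hE]; unfold extSeq; rw [if_pos rfl]
  have hu1 : E 1 ≤ v := by rw [hE1, hv]; exact le_max_left _ _
  have hstep : ∀ n, n + 2 ≤ M → E (n + 2) ≤ v + g (E (n + 1)) := by
    intro n hn
    have := le_psi d hd β hβ hM2 u (hG (E (n + 1))).1 (n + 2) (by omega) hn
    rw [eta_ext M u _ _ (by omega) hn, ← hv, ← hE] at this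
    have h3 : n + 2 - 1 = n + 1 := by omega
    rw [h3] at this
    rw [hg]; linarith
  have hEmono : ∀ n, n + 2 ≤ M → E (n + 1) ≤ E (n + 2) := by
    intro n hn
    rw [hE]; unfold extSeq
    rw [if_neg (by omega)]
    split_ifs with h
    · have h4 : n + 1 = M - 1 := by omega
      rw [h4]; exact hu.2.1
    · exact hu.2.2 (n + 1) (by omega) (by omega)
  have hvnn : 0 ≤ v := by
    have := hu.1
    linarith
  have hvpos : 0 < v := by
    rcases hvnn.lt_or_eq with h | h
    · exact h
    exfalso
    obtain ⟨a, ha⟩ := S_nonempty d β hβ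
    have hab := S_bounds d hd β hβ ha
    obtain ⟨hp0, hp1⟩ := pow_M_lt hM2 hab
    have key : ∀ n, n + 1 ≤ M → E (n + 1) ≤ (1 - a ^ n) / (1 - a ^ M) := by
      intro n
      induction n with
      | zero => intro _; simp; linarith
      | succ n ih =>
        intro hn
        have h1 := ih (by omega)
        have h2 := hstep n hn
        have h3 := hgle (E (n + 1)) a ha
        have h4 : a * E (n + 1) ≤ a * ((1 - a ^ n) / (1 - a ^ M)) :=
          mul_le_mul_of_nonneg_left h1 hab.1.le
        have h5 : a * ((1 - a ^ n) / (1 - a ^ M)) + hFun M a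
            = (1 - a ^ (n + 1)) / (1 - a ^ M) := by
          unfold hFun
          rw [pow_succ]; ring
        show E (n + 2) ≤ _
        linarith
    have h1 := key (M - 1) (by omega)
    have h2 : M - 1 + 1 = M := by omega
    rw [h2, hEM, le_div_iff₀ (by linarith)] at h1
    have h3 : a ^ M < a ^ (M - 1) := pow_lt_pow_right_of_lt_one₀ hab.1 hab.2 (by omega)
    linarith
  have hle : ∀ n, n + 1 ≤ M → E (n + 1) ≤ recSeq g v n := by
    intro n
    induction n with
    | zero => intro _; exact hu1
    | succ n ih =>
      intro hn
      have h1 := hmono.monotone (ih (by omega))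
      have h2 := hstep n hn
      show E (n + 2) ≤ v + g (recSeq g v n)
      linarith
  -- no slack at the last step
  have hnot : ¬ (1 < recSeq g v (M - 1)) := by
    intro hlt
    have hopen : IsOpen {x | 1 < recSeq g x (M - 1)} :=
      isOpen_lt continuous_const (recSeq_cont g hcont _)
    obtain ⟨ε, hε, hball⟩ := Metric.isOpen_iff.1 hopen v hlt
    obtain ⟨w, hw0, hwv, hwε⟩ : ∃ w, 0 ≤ w ∧ w < v ∧ v - w < ε := by
      refine ⟨max 0 (v - ε / 2), le_max_left _ _, max_lt hvpos (by linarith), ?_⟩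
      have := le_max_right 0 (v - ε / 2)
      linarith
    have hw : 1 < recSeq g w (M - 1) := by
      apply hball
      rw [Metric.mem_ball, Real.dist_eq, abs_lt]
      constructor <;> linarith
    obtain ⟨u', hu'⟩ : ∃ u' : ℕ → ℝ, ∀ i, u' i = min (recSeq g w (i - 1)) 1 := ⟨_, fun _ => rfl⟩
    have hmem : u' ∈ UM M := by
      refine ⟨?_, ?_, ?_⟩
      · rw [hu']; exact le_min (recSeq_nonneg g hg0 w hw0 _) zero_le_one
      · rw [hu']; exact min_le_right _ _
      · intro i hi _
        obtain ⟨k, rfl⟩ : ∃ k, i = k + 1 := ⟨i - 1, by omega⟩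
        rw [hu', hu']
        exact min_le_min_right _ (recSeq_mono g hmono hg0 w hw0 k)
    have hext : ∀ n, n + 1 ≤ M → extSeq M u' (n + 1) = min (recSeq g w n) 1 := by
      intro n hn
      unfold extSeq
      split_ifs with h
      · have : n = M - 1 := by omega
        rw [this, min_eq_right hw.le]
      · rw [hu']; rfl
    have hpsi : psiFun d β M u' ≤ w := by
      have h1 : u' 1 ≤ w := by rw [hu']; exact min_le_left _ _
      unfold psiFun
      refine max_le h1 ?_
      haveI : Nonempty (Sset d β) := (S_nonempty d β hβ).to_subtype
      refine ciSup_le fun γ => Psi_le d hd β hβ hM2 G hG u' w h1 ?_ γ.2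
      intro i hi1 hi2
      obtain ⟨k, rfl⟩ : ∃ k, i = k + 2 := ⟨i - 2, by omega⟩
      rw [← hg]
      have h3 : k + 2 - 1 = k + 1 := by omega
      rw [h3, hext (k + 1) hi2, hext k (by omega)]
      rcases le_total (recSeq g w k) 1 with h | h
      · rw [min_eq_left h]; exact min_le_left _ _
      · rw [min_eq_right h]
        exact (min_le_right _ _).trans (by linarith)
    have hstar : psiStar d β M ≤ psiFun d β M u' := by
      refine csInf_le ⟨0, ?_⟩ ⟨u', hmem, rfl⟩
      rintro _ ⟨y, hy, rfl⟩
      exact hy.1.trans (le_max_left _ _)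
    linarith
  have hstrict : ∀ k, E (k + 1) < recSeq g v k → ∀ n, k ≤ n → n + 1 ≤ M →
      E (n + 1) < recSeq g v n := by
    intro k hk n hkn
    induction n, hkn using Nat.le_induction with
    | base => intro _; exact hk
    | succ n _ ih =>
      intro hn
      have h1 := hmono (ih (by omega))
      have h2 := hstep n hn
      show E (n + 2) < v + g (recSeq g v n)
      linarith
  have heq : ∀ k, k + 1 ≤ M → E (k + 1) = recSeq g v k := by
    intro k hk
    rcases (hle k hk).lt_or_eq with h | h
    · exfalso
      have := hstrict k h (M - 1) (by omega) (by omega)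
      have h2 : M - 1 + 1 = M := by omega
      rw [h2, hEM] at this
      exact hnot this
    · exact h
  have hEle : ∀ i j, 1 ≤ i → i ≤ j → j ≤ M → E i ≤ E j := by
    intro i j hi hij
    induction j, hij using Nat.le_induction with
    | base => intro _; exact le_refl _
    | succ j hj ih =>
      intro hn
      obtain ⟨k, rfl⟩ : ∃ k, j = k + 1 := ⟨j - 1, by omega⟩
      exact (ih (by omega)).trans (hEmono k hn)
  refine ⟨?_, fun i => G (E (i - 1)), ?_, ?_, ?_⟩
  · rw [← hv, ← hE1]; exact (heq 0 (by omega)).symm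
  · intro i _ _; exact (hG _).1
  · intro i j hi hij hj
    have h := hEle (i - 1) (j - 1) (by omega) (by omega) (by omega)
    rcases h.lt_or_eq with h | h
    · have h1 := (hG (E (i - 1))).2 _ (hG (E (j - 1))).1
      have h2 := (hG (E (j - 1))).2 _ (hG (E (i - 1))).1
      show G (E (j - 1)) ≤ G (E (i - 1))
      by_contra hc
      push Not at hc
      nlinarith
    · show G (E (j - 1)) ≤ G (E (i - 1))
      rw [h]
  · intro i hi1 hi2
    obtain ⟨k, rfl⟩ : ∃ k, i = k + 2 := ⟨i - 2, by omega⟩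
    show etaFun M u (G (E (k + 1))) (k + 2) - hFun M (G (E (k + 1))) = _
    rw [eta_ext M u _ _ hi1 hi2, ← hE, ← hv]
    have h1 : E (k + 2) = v + g (E (k + 1)) := by
      rw [heq k (by omega)]; exact heq (k + 1) hi2
    rw [h1, hg]
    show _ - _ * E (k + 1) - _ = _
    ring
end

section
/- For every integer M ≥ 2, the optimal exponent satisfies γ_max^{M−1}·(1−γ_max)²/(1−γ_max^M)² ≤ ψ*_M ≤ (M+1)·γ_max^{M−1}/(1−γ_max)². -/
lemma gm_facts (d : ℕ) (hd : 1 ≤ d) (β : ℝ) (hβ : 0 < β) :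
    0 < gammaMin d β ∧ gammaMin d β ≤ gammaMax d β ∧ gammaMax d β < 1 := by
  have hd' : (1 : ℝ) ≤ d := by exact_mod_cast hd
  unfold gammaMin gammaMax
  refine ⟨by positivity, ?_, ?_⟩
  · gcongr
    linarith
  · rw [div_lt_one (by positivity)]
    linarith

lemma h_ge_s3 (m : ℕ) (γ : ℝ) (h0 : 0 < γ) (h1 : γ < 1) : 1 - γ ≤ hFun (m + 2) γ := by
  unfold hFun
  have hp : 0 < γ ^ (m + 2) := by positivity
  have hp1 : γ ^ (m + 2) < 1 := pow_lt_one₀ h0.le h1 (by omega)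
  rw [le_div_iff₀ (by linarith)]
  nlinarith

lemma eta_bound (m : ℕ) (u : ℕ → ℝ) (γ : ℝ) (h0 : 0 < γ) (h1 : γ < 1) (i : ℕ)
    (hi : i ≤ m + 2) :
    etaFun (m + 2) u γ i ≤ 1 + 2 * ∑ j ∈ Finset.range (m + 3), |u j| := by
  have key : ∀ j, j ≤ m + 2 → |u j| ≤ ∑ j ∈ Finset.range (m + 3), |u j| := fun j hj =>
    Finset.single_le_sum (f := fun j => |u j|) (fun _ _ => abs_nonneg _)
      (Finset.mem_range.2 (by omega))
  have hg : ∀ x : ℝ, - (γ * x) ≤ |x| := by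
    intro x
    have h3 : -x ≤ |x| := neg_le_abs x
    nlinarith [abs_nonneg x]
  unfold etaFun
  split_ifs with h h'
  · have := key 1 (by omega)
    have := le_abs_self (u 1)
    have := abs_nonneg (u 1)
    linarith
  · have := key (m + 2 - 1) (by omega)
    have := hg (u (m + 2 - 1))
    have := abs_nonneg (u (m + 2 - 1))
    linarith
  · have := key (i - 1) (by omega)
    have := hg (u (i - 1))
    have := key i hi
    have := le_abs_self (u i)
    linarith

lemma eta_le_sup (m : ℕ) (u : ℕ → ℝ) (γ : ℝ) (h0 : 0 < γ) (h1 : γ < 1) (i : ℕ)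
    (hi1 : 1 ≤ i) (hi : i ≤ m + 2) :
    etaFun (m + 2) u γ i ≤ ⨆ i : Set.Icc 1 (m + 2), etaFun (m + 2) u γ i.1 := by
  refine le_ciSup (f := fun i : Set.Icc 1 (m + 2) => etaFun (m + 2) u γ i.1) ?_ ⟨i, hi1, hi⟩
  refine ⟨1 + 2 * ∑ j ∈ Finset.range (m + 3), |u j|, ?_⟩
  rintro _ ⟨k, rfl⟩
  exact eta_bound m u γ h0 h1 k.1 k.2.2

lemma lower (d : ℕ) (hd : 1 ≤ d) (β : ℝ) (hβ : 0 < β) (m : ℕ) (u : ℕ → ℝ) :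
    gammaMax d β ^ (m + 1) * (1 - gammaMax d β) ^ 2 / (1 - gammaMax d β ^ (m + 2)) ^ 2
      ≤ psiFun d β (m + 2) u := by
  obtain ⟨hmin, hmm, hmax⟩ := gm_facts d hd β hβ
  have : Nonempty (Set.Icc 1 (m + 2)) := ⟨⟨1, by simp⟩⟩
  have hu1 : u 1 ≤ psiFun d β (m + 2) u := le_max_left _ _
  have hP : PsiFun (m + 2) u (gammaMax d β) ≤ psiFun d β (m + 2) u := by
    refine le_trans ?_ (le_max_right _ _)
    refine le_ciSup (f := fun γ : Sset d β => PsiFun (m + 2) u γ.1) ?_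
      ⟨gammaMax d β, hmm, le_rfl⟩
    refine ⟨1 + 2 * ∑ j ∈ Finset.range (m + 3), |u j|, ?_⟩
    rintro _ ⟨⟨γ, hγ1, hγ2⟩, rfl⟩
    have h0 : 0 < γ := by linarith
    have h1 : γ < 1 := by linarith
    have := h_ge_s3 m γ h0 h1
    have : (⨆ i : Set.Icc 1 (m + 2), etaFun (m + 2) u γ i.1)
        ≤ 1 + 2 * ∑ j ∈ Finset.range (m + 3), |u j| :=
      ciSup_le fun k => eta_bound m u γ h0 h1 k.1 k.2.2
    simp only [PsiFun]
    linarith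
  set ψ := psiFun d β (m + 2) u
  set g := gammaMax d β
  have g0 : 0 < g := by linarith
  have hB : ∀ i, 1 ≤ i → i ≤ m + 2 → etaFun (m + 2) u g i ≤ hFun (m + 2) g + ψ := by
    intro i h1 h2
    have := eta_le_sup m u g g0 hmax i h1 h2
    unfold PsiFun at hP
    linarith
  have hh := h_ge_s3 m g g0 hmax
  have hT : (∑ j ∈ Finset.range (m + 2), g ^ j) * hFun (m + 2) g = 1 := by
    have hp1 : g ^ (m + 2) < 1 := pow_lt_one₀ g0.le hmax (by omega)
    have := geom_sum_mul_neg g (m + 2)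
    unfold hFun
    rw [← mul_div_assoc, this, div_self (by linarith)]
  have hgoal : g ^ (m + 1) * (1 - g) ^ 2 / (1 - g ^ (m + 2)) ^ 2
      = g ^ (m + 1) * hFun (m + 2) g ^ 2 := by
    unfold hFun
    rw [div_pow, mul_div_assoc]
  rw [hgoal]
  set h := hFun (m + 2) g
  have hind : ∀ n, n ≤ m → u (n + 1) ≤ g ^ n * ψ + (h + ψ) * ∑ j ∈ Finset.range n, g ^ j := by
    intro n
    induction n with
    | zero => intro _; simpa using hu1
    | succ n ih =>
      intro hn
      have h1 := ih (by omega)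
      have h2 := hB (n + 2) (by omega) (by omega)
      have e : etaFun (m + 2) u g (n + 2) = u (n + 2) - g * u (n + 1) := by
        unfold etaFun
        rw [if_neg (by omega), if_neg (by omega)]
        rfl
      rw [e] at h2
      rw [geom_sum_succ, pow_succ]
      have := mul_le_mul_of_nonneg_left h1 g0.le
      show u (n + 2) ≤ _
      linarith
  have h1 := hind m le_rfl
  have h2 := hB (m + 2) (by omega) le_rfl
  have e : etaFun (m + 2) u g (m + 2) = 1 - g * u (m + 1) := by
    unfold etaFun
    rw [if_neg (by omega), if_pos rfl]
    rfl
  rw [e] at h2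
  have h3 := mul_le_mul_of_nonneg_left h1 g0.le
  rw [geom_sum_succ', geom_sum_succ] at hT
  have hpos : 0 < h := by linarith
  set S := ∑ j ∈ Finset.range m, g ^ j
  have h4 : 1 ≤ g ^ (m + 1) * ψ + (h + ψ) * (g * S + 1) := by
    rw [pow_succ]; linarith
  have h5 := mul_le_mul_of_nonneg_left h4 hpos.le
  have h6 : g * S + 1 = (g * S + 1) := rfl
  have e2 : (g * S + 1) * h = 1 - g ^ (m + 1) * h := by linarith
  have e3 : h * (g ^ (m + 1) * ψ + (h + ψ) * (g * S + 1))
      = g ^ (m + 1) * h * ψ + (h + ψ) * ((g * S + 1) * h) := by ring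
  rw [e3, e2] at h5
  linarith

lemma upper (d : ℕ) (hd : 1 ≤ d) (β : ℝ) (hβ : 0 < β) (m : ℕ) :
    psiFun d β (m + 2) (fun i => 1 - gammaMax d β ^ (i - 1)) ≤ gammaMax d β ^ (m + 1) := by
  obtain ⟨hmin, hmm, hmax⟩ := gm_facts d hd β hβ
  have : Nonempty (Set.Icc 1 (m + 2)) := ⟨⟨1, by simp⟩⟩
  have : Nonempty (Sset d β) := ⟨⟨gammaMax d β, hmm, le_rfl⟩⟩
  set g := gammaMax d β
  have g0 : 0 < g := by linarith
  have gp : ∀ n, 0 < g ^ n := fun n => pow_pos g0 n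
  unfold psiFun
  refine max_le (by simpa using (gp _).le) (ciSup_le ?_)
  rintro ⟨γ, hγ1, hγ2⟩
  have hγ2' : γ ≤ g := hγ2
  have h0 : 0 < γ := by linarith
  have h1 : γ < 1 := by linarith
  have hh := h_ge_s3 m γ h0 h1
  unfold PsiFun
  rw [sub_le_iff_le_add]
  refine ciSup_le ?_
  rintro ⟨i, hi1, hi2⟩
  have := gp (m + 1)
  simp only [etaFun]
  split_ifs with h h'
  · simp; linarith
  · have : γ * g ^ m ≤ g ^ (m + 1) := by
      rw [pow_succ']; exact mul_le_mul_of_nonneg_right hγ2' (gp m).le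
    have e : m + 2 - 1 - 1 = m := by omega
    rw [e]
    linarith
  · obtain ⟨k, rfl⟩ : ∃ k, i = k + 2 := ⟨i - 2, by omega⟩
    have : γ * g ^ k ≤ g ^ (k + 1) := by
      rw [pow_succ']; exact mul_le_mul_of_nonneg_right hγ2' (gp k).le
    have e : k + 2 - 1 - 1 = k := by omega
    have e' : k + 2 - 1 = k + 1 := by omega
    rw [e, e']
    linarith

theorem stmt3 (d : ℕ) (hd : 1 ≤ d) (β : ℝ) (hβ : 0 < β) (M : ℕ) (hM2 : 2 ≤ M) :
    gammaMax d β ^ (M - 1) * (1 - gammaMax d β) ^ 2 / (1 - gammaMax d β ^ M) ^ 2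
      ≤ psiStar d β M ∧
    psiStar d β M ≤ (M + 1) * gammaMax d β ^ (M - 1) / (1 - gammaMax d β) ^ 2 := by
  obtain ⟨m, rfl⟩ : ∃ m, M = m + 2 := ⟨M - 2, by omega⟩
  obtain ⟨hmin, hmm, hmax⟩ := gm_facts d hd β hβ
  have g0 : 0 < gammaMax d β := by linarith
  have e : m + 2 - 1 = m + 1 := by omega
  rw [e]
  have hU : (fun i => 1 - gammaMax d β ^ (i - 1)) ∈ UM (m + 2) := by
    refine ⟨by simp, ?_, ?_⟩
    · have := pow_pos g0 (m + 2 - 1 - 1)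
      simp only
      linarith
    · intro i _ _
      have := pow_le_pow_of_le_one g0.le hmax.le (show i - 1 ≤ i + 1 - 1 by omega)
      simp only
      linarith
  constructor
  · refine le_csInf ⟨_, _, hU, rfl⟩ ?_
    rintro _ ⟨u, _, rfl⟩
    exact lower d hd β hβ m u
  · have h1 : psiStar d β (m + 2) ≤ gammaMax d β ^ (m + 1) := by
      refine le_trans (csInf_le ⟨gammaMax d β ^ (m + 1) * (1 - gammaMax d β) ^ 2
        / (1 - gammaMax d β ^ (m + 2)) ^ 2, ?_⟩ ⟨_, hU, rfl⟩) (upper d hd β hβ m)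
      · rintro _ ⟨u, _, rfl⟩
        exact lower d hd β hβ m u
    refine h1.trans ?_
    have hp := pow_pos g0 (m + 1)
    have h2 : 0 < 1 - gammaMax d β := by linarith
    rw [le_div_iff₀ (by positivity)]
    have h3 : (1 - gammaMax d β) ^ 2 ≤ 1 := pow_le_one₀ h2.le (by linarith)
    have h4 : (1 : ℝ) ≤ ((m + 2 : ℕ) : ℝ) + 1 := by
      have : (0 : ℝ) ≤ ((m + 2 : ℕ) : ℝ) := Nat.cast_nonneg _
      linarith
    nlinarith
end

section
/- Let M ≥ 3 be an integer, let (u_0, u_1, …, u_M) solve the optimality system, and fix c ∈ (γ_min, 1/2]. If γ_M < c, then u_1 + φ_M(u_{M−1}) > [ c^{−1}·γ_max^{−(M−3)}·(1 − h_M(c)) − h_M(γ_max)·S_{M−2}(γ_max) ] / [ S_{M−2}(γ_max) + γ_max + c^{−1}·γ_max^{−(M−3)} ] − c·h'_M(c) + h_M(c). -/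
/-- φ_M(x) = min_{γ∈𝒮} (γ·x + h_M(γ)). -/
noncomputable def phiFun (d : ℕ) (β : ℝ) (M : ℕ) (x : ℝ) : ℝ :=
  sInf ((fun γ => γ * x + hFun M γ) '' Sset d β)

/-- (u_0, …, u_M) solves the optimality system: u_0 = 0, u_M = 1,
0 < u_1 < ⋯ < u_{M−1} < 1, and u_i = u_1 + φ_M(u_{i−1}) for 2 ≤ i ≤ M. -/
def SolvesOptSystem (d : ℕ) (β : ℝ) (M : ℕ) (u : ℕ → ℝ) : Prop :=
  u 0 = 0 ∧ u M = 1 ∧ 0 < u 1 ∧ u (M - 1) < 1 ∧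
  (∀ i, 1 ≤ i → i + 1 ≤ M - 1 → u i < u (i + 1)) ∧
  ∀ i, 2 ≤ i → i ≤ M → u i = u 1 + phiFun d β M (u (i - 1))

/-- S_n(a) = Σ_{k=0}^{n−1} a^{−k}. -/
noncomputable def Sgeo (n : ℕ) (a : ℝ) : ℝ := ∑ k ∈ Finset.range n, a⁻¹ ^ k

lemma hFun_ineq (n : ℕ) (x : ℝ) (h0 : 0 < x) (h1 : x < 1) :
    0 < ((n:ℝ) + 2) * (1 - x) * (1 + x ^ (n+2)) - (1 + x) * (1 - x ^ (n+2)) := by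
  induction n with
  | zero =>
    have : 0 < (1 - x)^3 := by have : 0 < 1 - x := by linarith
                               positivity
    push_cast; nlinarith
  | succ n ih =>
    have hg : (1 + x) * (1 - x ^ (n+2)) < ((n:ℝ) + 2) * (1 - x) * (1 + x ^ (n+2)) := by linarith
    have key : 0 ≤ (1 - x) * ((1 - x) * (1 - x^(n+2))) := by
      have : x^(n+2) ≤ 1 := pow_le_one₀ h0.le h1.le
      have h2 : 0 ≤ 1 - x := by linarith
      have h3 : 0 ≤ 1 - x^(n+2) := by linarith
      positivity
    have k3 : 1 - x^(n+2) ≤ (n+2) * (1-x) := by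
      have := one_add_mul_le_pow (a := x - 1) (by linarith) (n+2)
      push_cast at this
      have e : 1 + (x-1) = x := by ring
      rw [e] at this; linarith
    have hx3 : x ^ (n+1+2) = x * x^(n+2) := by ring
    rw [hx3]; push_cast
    generalize x^(n+2) = y at *
    have k4 : 0 ≤ (1 - x) * ((n+2) * (1-x) - (1 - y)) := mul_nonneg (by linarith) (by linarith)
    nlinarith

lemma hFun_d1 (n : ℕ) (x : ℝ) (h0 : 0 < x) (h1 : x < 1) :
    HasDerivAt (hFun (n+2)) ((-(1 - x^(n+2)) + (1-x) * (((n:ℝ)+2) * x^(n+1))) / (1 - x^(n+2))^2) x := by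
  have hy : 1 - x^(n+2) ≠ 0 := by
    have : x^(n+2) < 1 := pow_lt_one₀ h0.le h1 (by omega)
    linarith
  have a : HasDerivAt (fun x : ℝ => 1 - x) (-1) x := by
    simpa using (hasDerivAt_id x).const_sub 1
  have b : HasDerivAt (fun x : ℝ => 1 - x^(n+2)) (-(((n:ℝ)+2) * x^(n+1))) x := by
    have := (hasDerivAt_pow (n+2) x).const_sub 1
    push_cast at this
    simpa using this
  have := a.div b hy
  refine this.congr_deriv ?_
  congr 1; ring

lemma hFun_d2 (n : ℕ) (x : ℝ) (h0 : 0 < x) (h1 : x < 1) :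
    ∃ D, 0 < D ∧ HasDerivAt (fun x : ℝ => (-(1 - x^(n+2)) + (1-x) * (((n:ℝ)+2) * x^(n+1))) / (1 - x^(n+2))^2) D x := by
  have hy : 0 < 1 - x^(n+2) := by
    have : x^(n+2) < 1 := pow_lt_one₀ h0.le h1 (by omega)
    linarith
  have a : HasDerivAt (fun x : ℝ => 1 - x) (-1) x := by
    simpa using (hasDerivAt_id x).const_sub 1
  have b : HasDerivAt (fun x : ℝ => 1 - x^(n+2)) (-(((n:ℝ)+2) * x^(n+1))) x := by
    have := (hasDerivAt_pow (n+2) x).const_sub 1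
    push_cast at this
    simpa using this
  have e : HasDerivAt (fun x : ℝ => ((n:ℝ)+2) * x^(n+1)) (((n:ℝ)+2) * ((n+1) * x^n)) x := by
    have := (hasDerivAt_pow (n+1) x).const_mul ((n:ℝ)+2)
    push_cast at this
    simpa using this
  have f := (b.neg.add (a.mul e)).div (b.pow 2) (by simpa using (pow_pos hy 2).ne')
  refine ⟨_, ?_, f⟩
  have i := hFun_ineq n x h0 h1
  simp only [Pi.pow_apply, Pi.add_apply, Pi.mul_apply, Pi.neg_apply]
  apply div_pos _ (by positivity)
  have : 0 < ((n:ℝ)+2) * x^n * (1 - x^(n+2)) *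
    (((n:ℝ) + 2) * (1 - x) * (1 + x ^ (n+2)) - (1 + x) * (1 - x ^ (n+2))) := by positivity
  refine lt_of_lt_of_eq this ?_
  have e1 : x^(n+2) = x^n*x^2 := by ring
  have e2 : x^(n+1) = x^n*x := by ring
  push_cast
  simp only [e1, e2]
  ring

lemma hFun_conv (n : ℕ) : StrictConvexOn ℝ (Set.Ioo 0 1) (hFun (n+2)) := by
  apply strictConvexOn_of_deriv2_pos' (convex_Ioo 0 1)
  · intro x hx
    exact (hFun_d1 n x hx.1 hx.2).continuousAt.continuousWithinAt
  · intro x hx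
    obtain ⟨D, hD, h⟩ := hFun_d2 n x hx.1 hx.2
    have : deriv (hFun (n+2)) =ᶠ[nhds x] (fun x : ℝ => (-(1 - x^(n+2)) + (1-x) * (((n:ℝ)+2) * x^(n+1))) / (1 - x^(n+2))^2) := by
      filter_upwards [isOpen_Ioo.mem_nhds hx] with y hy
      exact (hFun_d1 n y hy.1 hy.2).deriv
    simp only [Function.iterate_succ, Function.iterate_zero, Function.comp, id]
    rw [this.deriv_eq, h.deriv]; exact hD

lemma hFun_tangent (n : ℕ) (g c : ℝ) (h0 : 0 < g) (hgc : g < c) (h1 : c < 1) :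
    hFun (n+2) c + deriv (hFun (n+2)) c * (g - c) < hFun (n+2) g := by
  have hd := (hFun_d1 n c (h0.trans hgc) h1).differentiableAt
  have := (hFun_conv n).slope_lt_deriv (x := g) (y := c) ⟨h0, hgc.trans h1⟩ ⟨h0.trans hgc, h1⟩ hgc hd
  rw [slope_def_field, div_lt_iff₀ (by linarith)] at this
  linarith

lemma phi_le (d : ℕ) (β : ℝ) (M : ℕ) (hM : M ≠ 0) (h0 : 0 < gammaMin d β) (h1 : gammaMax d β < 1)
    (x γ : ℝ) (hγ : γ ∈ Sset d β) : phiFun d β M x ≤ γ * x + hFun M γ := by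
  refine csInf_le ?_ (Set.mem_image_of_mem (fun γ => γ * x + hFun M γ) hγ)
  refine ⟨-|x|, ?_⟩
  rintro _ ⟨g, hg, rfl⟩
  have g0 : 0 < g := h0.trans_le hg.1
  have g1 : g < 1 := hg.2.trans_lt h1
  have : 0 ≤ hFun M g := by
    have : g^M < 1 := pow_lt_one₀ g0.le g1 hM
    unfold hFun
    exact div_nonneg (by linarith) (by linarith)
  have h3 : |g * x| ≤ |x| := by
    rw [abs_mul, abs_of_pos g0]
    nlinarith [abs_nonneg x]
  have := (abs_le.1 h3).1
  show -|x| ≤ g * x + hFun M g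
  linarith

lemma iter_bound (g a : ℝ) (hg : 0 < g) (u : ℕ → ℝ) (N : ℕ)
    (hu : ∀ i, 1 ≤ i → i ≤ N → u (i+1) ≤ a + g * u i) (m : ℕ) (hm : m ≤ N) :
    g⁻¹ ^ m * u (m+1) * g ≤ g * u 1 + a * Sgeo m g := by
  induction m with
  | zero => simp [Sgeo, mul_comm]
  | succ m ih =>
    have := ih (by omega)
    have h2 := hu (m+1) (by omega) hm
    have e : Sgeo (m+1) g = Sgeo m g + g⁻¹^m := by simp [Sgeo, Finset.sum_range_succ]
    rw [e]
    have hp : 0 < g⁻¹^m := by positivity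
    have h3 : g⁻¹ ^ (m+1) * u (m+1+1) * g = g⁻¹^m * u (m+1+1) := by
      rw [pow_succ]; field_simp
    rw [h3]
    nlinarith [mul_le_mul_of_nonneg_left h2 hp.le]

theorem stmt11 (d : ℕ) (hd : 1 ≤ d) (β : ℝ) (hβ : 0 < β) (M : ℕ) (hM3 : 3 ≤ M)
    (u : ℕ → ℝ) (hsol : SolvesOptSystem d β M u)
    (c : ℝ) (hc1 : gammaMin d β < c) (hc2 : c ≤ 1 / 2)
    (gM : ℝ) (hgM : gM ∈ Sset d β)
    (hgMmin : ∀ γ ∈ Sset d β,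
      gM * u (M - 1) + hFun M gM ≤ γ * u (M - 1) + hFun M γ)
    (hlt : gM < c) :
    (c⁻¹ * (gammaMax d β)⁻¹ ^ (M - 3) * (1 - hFun M c)
        - hFun M (gammaMax d β) * Sgeo (M - 2) (gammaMax d β)) /
      (Sgeo (M - 2) (gammaMax d β) + gammaMax d β + c⁻¹ * (gammaMax d β)⁻¹ ^ (M - 3))
      - c * deriv (hFun M) c + hFun M c
    < u 1 + phiFun d β M (u (M - 1)) := by
  have hd' : (1:ℝ) ≤ d := by exact_mod_cast hd
  have hden : 0 < 2 * β + d := by linarith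
  have hmin : 0 < gammaMin d β := by unfold gammaMin; positivity
  have hmax1 : gammaMax d β < 1 := by
    unfold gammaMax; rw [div_lt_one hden]; linarith
  have hmaxh : 1 / 2 < gammaMax d β := by
    unfold gammaMax; rw [lt_div_iff₀ hden]; linarith
  have hcS : c ∈ Sset d β := ⟨hc1.le, by linarith⟩
  have hgS : gammaMax d β ∈ Sset d β := ⟨by linarith, le_refl _⟩
  obtain ⟨-, huM, -, -, -, hrec⟩ := hsol
  obtain ⟨n, rfl⟩ : ∃ n, M = n + 3 := ⟨M - 3, by omega⟩
  have hphi := fun x γ hγ => phi_le d β (n+3) (by omega) hmin hmax1 x γ hγ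
  have hg0 : 0 < gM := hmin.trans_le hgM.1
  have htan := hFun_tangent (n+1) gM c hg0 hlt (by linarith)
  have hcle := hgMmin c hcS
  have e1 : n + 3 - 1 = n + 2 := by omega
  have e2 : n + 3 - 2 = n + 1 := by omega
  have e3 : n + 3 - 3 = n := by omega
  have e4 : n + 1 + 2 = n + 3 := by omega
  rw [e4] at htan
  simp only [e1] at hgMmin hcle
  simp only [e1, e2, e3]
  set g := gammaMax d β with hgdef
  have hgpos : 0 < g := by linarith
  have hc0 : 0 < c := by linarith
  have hphi' : gM * u (n+2) + hFun (n+3) gM ≤ phiFun d β (n+3) (u (n+2)) := by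
    refine le_csInf (Set.Nonempty.image _ ⟨c, hcS⟩) ?_
    rintro _ ⟨γ, hγ, rfl⟩
    exact hgMmin γ hγ
  have hx : 0 < u (n+2) + deriv (hFun (n+3)) c := by
    by_contra hcon
    push Not at hcon
    nlinarith [mul_nonneg_of_nonpos_of_nonpos (sub_neg.2 hlt).le hcon]
  have hx2 := mul_pos hg0 hx
  have hM := hrec (n+3) (by omega) le_rfl
  rw [huM, e1] at hM
  have hM1 := hphi (u (n+2)) c hcS
  have hit := iter_bound g (u 1 + hFun (n+3) g) hgpos u (n+1) (by
    intro i hi hi2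
    have := hrec (i+1) (by omega) (by omega)
    have h2 := hphi (u i) g hgS
    simp only [Nat.add_sub_cancel] at this
    linarith) (n+1) le_rfl
  have h3 : g⁻¹ ^ (n+1) * u (n+1+1) * g = g⁻¹^n * u (n+2) := by
    rw [pow_succ]; field_simp
  rw [h3] at hit
  have hS : 0 ≤ Sgeo (n+1) g := by
    unfold Sgeo; positivity
  have hgn : 0 < g⁻¹ ^ n := by positivity
  have hB : c⁻¹ * g⁻¹^n * (1 - hFun (n+3) c - u 1) ≤ g⁻¹^n * u (n+2) := by
    have : c⁻¹ * (1 - hFun (n+3) c - u 1) ≤ u (n+2) := by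
      rw [inv_mul_le_iff₀ hc0]; linarith
    nlinarith [mul_le_mul_of_nonneg_left this hgn.le]
  have hfin : (c⁻¹ * g⁻¹ ^ n * (1 - hFun (n+3) c) - hFun (n+3) g * Sgeo (n+1) g) /
      (Sgeo (n+1) g + g + c⁻¹ * g⁻¹ ^ n) ≤ u 1 := by
    rw [div_le_iff₀ (by positivity)]
    linarith
  linarith
end
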